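/- Let p be a prime and q = p^k ≥ 3 a power of p. Let T : F_p[y] → F_p[y] be an F_p-linear operator with deg T(f) < deg f for every nonzero f, and suppose there exist a ∈ F_p and polynomials c_1, …, c_q ∈ F_p[y] with deg c_i < i for 1 ≤ i ≤ q−1 and c_q = a·y^q + r for some r with deg r < q, such that T(y^n) = −( c_1·T(y^{n−1}) + ⋯ + c_q·T(y^{n−q}) ) for all n ≥ q (i.e., the companion polynomial is X^q + a·y^q + terms of total degree < q). Then there is a constant C > 0 such that N_T(y^n) ≤ C·n^{log(q−1)/log q} for all n ≥ 1. -/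

import Mathlib

/-!
Write a natural number in base `q` and read its digits in base `q - 1`; call the result its
content. Content is subadditive, grows like `n ^ (log (q - 1) / log q)`, and is multiplied by
`q - 1` when its argument is multiplied by `q`. It therefore suffices that `T` strictly lowers the
content of monomials.

The companion polynomial `P` annihilates the sequence `n ↦ T (y ^ n)` through the shift, hence so
does `P ^ (q ^ m)`. As `q ^ m`-th powers are additive, this is again a recurrence with `q` terms:
its coefficients are the `c i ^ (q ^ m)` and its steps are the `q ^ m * i`. Choosing `m` so that
`q ^ (m + 1)` is the leading power of `q` in `n`, the index `n - q ^ m * i` is obtained by borrowing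
at most once, from the leading digit, so its content drops by at least `(q - 1) ^ m * (i - 1)`. The
coefficient `c i ^ (q ^ m)` adds at most that much, and the claim follows by induction on `n`.
-/

open Polynomial

/-- The nilpotence index of `f` with respect to `T`: the largest `k` with `T^k f ≠ 0`. -/
noncomputable def nilpIndex {R : Type} [CommRing R]
    (T : Module.End R (Polynomial R)) (f : Polynomial R) : ℕ :=
  sSup {k : ℕ | (T ^ k) f ≠ 0}

section DigitContent

/-- The content of a natural number, for an input base `b` and an output base `d`: its base `b`
digits, read in base `d`. It bounds the nilpotence index when `b = q` and `d = q - 1`. -/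
def digitContent (b d n : ℕ) : ℕ := Nat.ofDigits d (Nat.digits b n)

variable {b d : ℕ}

theorem digitContent_zero (b d : ℕ) : digitContent b d 0 = 0 := by simp [digitContent]

theorem digitContent_add_mul (hb : 1 < b) {x : ℕ} (hx : x < b) (y : ℕ) :
    digitContent b d (x + b * y) = x + d * digitContent b d y := by
  by_cases h : x ≠ 0 ∨ y ≠ 0
  · rw [digitContent, Nat.digits_add b hb x y hx h, Nat.ofDigits_cons, digitContent]
  · obtain ⟨rfl, rfl⟩ : x = 0 ∧ y = 0 := by simpa using h
    simp [digitContent_zero]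

theorem digitContent_of_lt (hb : 1 < b) {n : ℕ} (hn : n < b) : digitContent b d n = n := by
  simpa [digitContent_zero] using digitContent_add_mul (d := d) hb hn 0

theorem digitContent_self (hb : 1 < b) : digitContent b d b = d := by
  simpa [digitContent_of_lt hb hb] using digitContent_add_mul (d := d) hb (by omega : 0 < b) 1

theorem exists_lt_eq_add_mul {m : ℕ} (hm : 0 < m) (n : ℕ) : ∃ x y, x < m ∧ n = x + m * y :=
  ⟨n % m, n / m, Nat.mod_lt n hm, (Nat.mod_add_div n m).symm⟩

theorem digitContent_add_pow_mul (hb : 1 < b) {m l : ℕ} (hl : l < b ^ m) (n : ℕ) :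
    digitContent b d (l + b ^ m * n) = digitContent b d l + d ^ m * digitContent b d n := by
  induction m generalizing l with
  | zero =>
    obtain rfl : l = 0 := by simpa using hl
    simp [digitContent_zero]
  | succ m ih =>
    obtain ⟨x, y, hx, rfl⟩ := exists_lt_eq_add_mul (by omega : 0 < b) l
    have hy : y < b ^ m := by
      rw [pow_succ'] at hl
      exact lt_of_mul_lt_mul_left (by omega) b.zero_le
    have hn : x + b * y + b ^ (m + 1) * n = x + b * (y + b ^ m * n) := by ring
    rw [hn, digitContent_add_mul hb hx, digitContent_add_mul hb hx, ih hy]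
    ring

theorem digitContent_pow_mul (hb : 1 < b) (m n : ℕ) :
    digitContent b d (b ^ m * n) = d ^ m * digitContent b d n := by
  simpa [digitContent_zero] using digitContent_add_pow_mul (d := d) hb (by positivity : 0 < b ^ m) n

theorem digitContent_le_self (hdb : d ≤ b) (n : ℕ) : digitContent b d n ≤ n :=
  (Nat.ofDigits_monotone _ hdb).trans_eq (Nat.ofDigits_digits b n)

theorem digitContent_succ_le (hb : 1 < b) (hdb : d ≤ b) (n : ℕ) :
    digitContent b d (n + 1) ≤ digitContent b d n + 1 := by
  induction n using Nat.strong_induction_on with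
  | _ n ih =>
    obtain ⟨x, y, hx, rfl⟩ := exists_lt_eq_add_mul (by omega : 0 < b) n
    rw [digitContent_add_mul hb hx]
    rcases Nat.lt_or_ge (x + 1) b with hx' | hx'
    · rw [add_right_comm, digitContent_add_mul hb hx', add_right_comm]
    · obtain rfl : b = x + 1 := by omega
      have hcarry : x + (x + 1) * y + 1 = 0 + (x + 1) * (y + 1) := by ring
      rw [hcarry, digitContent_add_mul hb (by omega)]
      nlinarith [ih y (by nlinarith)]

theorem digitContent_add_le (hb : 1 < b) (hdb : d ≤ b) (m n : ℕ) :
    digitContent b d (m + n) ≤ digitContent b d m + digitContent b d n := by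
  induction m using Nat.strong_induction_on generalizing n with
  | _ m ih =>
    rcases Nat.eq_zero_or_pos m with rfl | hm
    · simp
    obtain ⟨x, y, hx, rfl⟩ := exists_lt_eq_add_mul (by omega : 0 < b) m
    obtain ⟨x', y', hx', rfl⟩ := exists_lt_eq_add_mul (by omega : 0 < b) n
    have hy := ih y (by nlinarith) y'
    rw [digitContent_add_mul hb hx, digitContent_add_mul hb hx']
    rcases Nat.lt_or_ge (x + x') b with h | h
    · have hsum : x + b * y + (x' + b * y') = (x + x') + b * (y + y') := by ring
      rw [hsum, digitContent_add_mul hb h]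
      nlinarith
    · obtain ⟨z, hz⟩ := Nat.exists_eq_add_of_le h
      have hsum : x + b * y + (x' + b * y') = z + b * (y + y' + 1) := by linear_combination hz
      rw [hsum, digitContent_add_mul hb (by omega)]
      nlinarith [digitContent_succ_le hb hdb (y + y')]

theorem digitContent_sub_add_le_of_lt_sq (hb : 1 < b) (hbd : b ≤ d + 1) {n i : ℕ} (hi : i ≤ b)
    (hn : b ≤ n) (hn' : n < b ^ 2) :
    digitContent b d (n - i) + i ≤ digitContent b d n + 1 := by
  obtain ⟨x, y, hx, rfl⟩ := exists_lt_eq_add_mul (by omega : 0 < b) n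
  have hy : y < b := by nlinarith
  obtain ⟨y, rfl⟩ : ∃ z, y = z + 1 := Nat.exists_eq_succ_of_ne_zero (by rintro rfl; omega)
  rw [digitContent_add_mul hb hx, digitContent_of_lt hb hy]
  rcases Nat.lt_or_ge x i with hxi | hxi
  · have hborrow : x + b * (y + 1) - i = (x + b - i) + b * y := by rw [mul_add]; omega
    rw [hborrow, digitContent_add_mul hb (by omega), digitContent_of_lt hb (by omega), mul_add]
    omega
  · rw [Nat.sub_add_comm hxi, digitContent_add_mul hb (by omega), digitContent_of_lt hb hy]
    omega

theorem digitContent_sub_pow_mul_add_le (hb : 1 < b) (hbd : b ≤ d + 1) {m n i : ℕ} (hi : i ≤ b)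
    (hn : b ^ (m + 1) ≤ n) (hn' : n < b ^ (m + 2)) :
    digitContent b d (n - b ^ m * i) + d ^ m * i ≤ digitContent b d n + d ^ m := by
  obtain ⟨l, A, hl, rfl⟩ := exists_lt_eq_add_mul (by positivity : 0 < b ^ m) n
  have hA : b ≤ A := by
    by_contra! h
    rw [pow_succ] at hn
    nlinarith
  have hA' : A < b ^ 2 := by
    rw [pow_add] at hn'
    exact lt_of_mul_lt_mul_left (by omega) (b ^ m).zero_le
  have hsub : l + b ^ m * A - b ^ m * i = l + b ^ m * (A - i) := by
    rw [Nat.mul_sub, Nat.add_sub_assoc (Nat.mul_le_mul_left _ (hi.trans hA))]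
  rw [hsub, digitContent_add_pow_mul hb hl, digitContent_add_pow_mul hb hl]
  nlinarith [Nat.mul_le_mul_left (d ^ m) (digitContent_sub_add_le_of_lt_sq hb hbd hi hA hA')]

theorem digitContent_le_geom_sum (hb : 1 < b) {m n : ℕ} (hn : n < b ^ m) :
    digitContent b d n ≤ (b - 1) * ∑ i ∈ Finset.range m, d ^ i := by
  induction m generalizing n with
  | zero =>
    obtain rfl : n = 0 := by simpa using hn
    simp [digitContent_zero]
  | succ m ih =>
    obtain ⟨x, y, hx, rfl⟩ := exists_lt_eq_add_mul (by omega : 0 < b) n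
    have hy : y < b ^ m := by
      rw [pow_succ'] at hn
      exact lt_of_mul_lt_mul_left (by omega) b.zero_le
    calc digitContent b d (x + b * y)
        = x + d * digitContent b d y := digitContent_add_mul hb hx y
      _ ≤ (b - 1) + d * ((b - 1) * ∑ i ∈ Finset.range m, d ^ i) := by
        gcongr
        · omega
        · exact ih hy
      _ = (b - 1) * ∑ i ∈ Finset.range (m + 1), d ^ i := by rw [geom_sum_succ]; ring

theorem digitContent_le_mul_pow_log (hb : 1 < b) (hd : 2 ≤ d) (n : ℕ) :
    digitContent b d n ≤ (b - 1) * d * d ^ Nat.log b n :=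
  calc digitContent b d n
      ≤ (b - 1) * ∑ i ∈ Finset.range (Nat.log b n + 1), d ^ i :=
        digitContent_le_geom_sum hb (Nat.lt_pow_succ_log_self hb n)
    _ ≤ (b - 1) * d ^ (Nat.log b n + 1) :=
        Nat.mul_le_mul_left _ (Nat.geomSum_lt hd fun _ ↦ Finset.mem_range.mp).le
    _ = (b - 1) * d * d ^ Nat.log b n := by rw [pow_succ', mul_assoc]

theorem pow_log_le_rpow_logb (hb : 1 < b) (hd : 1 ≤ d) {n : ℕ} (hn : n ≠ 0) :
    (d : ℝ) ^ Nat.log b n ≤ (n : ℝ) ^ Real.logb b d := by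
  have hb' : (1 : ℝ) < b := by exact_mod_cast hb
  calc (d : ℝ) ^ Nat.log b n
      = ((b : ℝ) ^ Real.logb b d) ^ Nat.log b n := by
        rw [Real.rpow_logb (by positivity) hb'.ne' (by positivity)]
    _ = ((b : ℝ) ^ Nat.log b n) ^ Real.logb b d := Real.rpow_pow_comm (by positivity) _ _
    _ ≤ (n : ℝ) ^ Real.logb b d :=
        Real.rpow_le_rpow (by positivity) (by exact_mod_cast Nat.pow_log_le_self b hn)
          (Real.logb_nonneg hb' (by exact_mod_cast hd))

theorem digitContent_le_rpow (hb : 1 < b) (hd : 2 ≤ d) (n : ℕ) :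
    (digitContent b d n : ℝ) ≤ (b - 1 : ℕ) * d * (n : ℝ) ^ Real.logb b d := by
  rcases eq_or_ne n 0 with rfl | hn
  · rw [digitContent_zero, Nat.cast_zero]
    positivity
  · calc (digitContent b d n : ℝ)
        ≤ (b - 1 : ℕ) * d * (d : ℝ) ^ Nat.log b n := by
          exact_mod_cast digitContent_le_mul_pow_log hb hd n
      _ ≤ (b - 1 : ℕ) * d * (n : ℝ) ^ Real.logb b d := by
          gcongr
          exact pow_log_le_rpow_logb hb (by omega) hn

end DigitContent

section WeightLT

/-- The polynomials all of whose monomials `X ^ l` have weight `w l < N`, for an arbitrary weight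
function `w` on exponents; for `w = id` this is `Polynomial.degreeLT R N`. -/
def weightLT (R : Type*) [Semiring R] (w : ℕ → ℕ) (N : ℕ) : Submodule R R[X] where
  carrier := {f | ∀ l, N ≤ w l → f.coeff l = 0}
  add_mem' hf hg l hl := by rw [coeff_add, hf l hl, hg l hl, add_zero]
  zero_mem' _ _ := coeff_zero _
  smul_mem' a f hf l hl := by rw [coeff_smul, hf l hl, smul_zero]

variable {R : Type*} {w : ℕ → ℕ} {M N : ℕ}

theorem weightLT_mono [Semiring R] (hMN : M ≤ N) : weightLT R w M ≤ weightLT R w N :=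
  fun _ hf l hl ↦ hf l (hMN.trans hl)

theorem weightLT_zero [Semiring R] : weightLT R w 0 = ⊥ :=
  (Submodule.eq_bot_iff _).mpr fun _ hf ↦ Polynomial.ext fun l ↦ hf l (w l).zero_le

theorem X_pow_mem_weightLT [Semiring R] {n : ℕ} (hn : w n < N) : X ^ n ∈ weightLT R w N := by
  intro l hl
  rw [coeff_X_pow, if_neg]
  rintro rfl
  exact hn.not_ge hl

theorem mem_weightLT_of_degree_lt [Semiring R] (hw : ∀ n, w n ≤ n) {f : R[X]} (hf : f.degree < N) :
    f ∈ weightLT R w N :=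
  fun l hl ↦ coeff_eq_zero_of_degree_lt (hf.trans_le (by exact_mod_cast hl.trans (hw l)))

theorem mem_weightLT_of_degree_le [Semiring R] (hw : ∀ n, w n ≤ n) (hN : w N < N) {f : R[X]}
    (hf : f.degree ≤ N) : f ∈ weightLT R w N := by
  intro l hl
  have hNl : N ≠ l := by rintro rfl; exact hN.not_ge hl
  exact coeff_eq_zero_of_degree_lt
    (hf.trans_lt (by exact_mod_cast (hl.trans (hw l)).lt_of_ne hNl))

theorem mul_mem_weightLT [Semiring R] (hw : ∀ m n, w (m + n) ≤ w m + w n) {f g : R[X]}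
    (hf : f ∈ weightLT R w (M + 1)) (hg : g ∈ weightLT R w N) : f * g ∈ weightLT R w (M + N) := by
  intro l hl
  rw [coeff_mul]
  refine Finset.sum_eq_zero fun ⟨i, j⟩ hij ↦ ?_
  obtain rfl : i + j = l := Finset.HasAntidiagonal.mem_antidiagonal.mp hij
  rcases Nat.lt_or_ge M (w i) with hi | hi
  · rw [hf i hi, zero_mul]
  · rw [hg j (by have := hw i j; omega), mul_zero]

theorem pow_expChar_pow_mem_weightLT [CommSemiring R] (p : ℕ) [ExpChar R p] {e K : ℕ}
    (hw : ∀ n, w (p ^ e * n) ≤ K * w n) {f : R[X]} (hf : f ∈ weightLT R w (N + 1)) :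
    f ^ p ^ e ∈ weightLT R w (K * N + 1) := by
  intro l hl
  rw [← map_iterateFrobenius_expand, coeff_map, coeff_expand (expChar_pow_pos R p e)]
  split_ifs with hdvd
  · obtain ⟨n, rfl⟩ := hdvd
    have hn : N + 1 ≤ w n := lt_of_mul_lt_mul_left (hl.trans (hw n)) K.zero_le
    rw [Nat.mul_div_cancel_left _ (expChar_pow_pos R p e), hf n hn, map_zero]
  · exact map_zero _

theorem map_mem_weightLT [Semiring R] {T : R[X] →ₗ[R] R[X]}
    (hT : ∀ n, T (X ^ n) ∈ weightLT R w (w n)) {f : R[X]} (hf : f ∈ weightLT R w (N + 1)) :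
    T f ∈ weightLT R w N := by
  rw [f.as_sum_support_C_mul_X_pow, map_sum]
  refine Submodule.sum_mem _ fun n hn ↦ ?_
  have hwn : w n ≤ N := by
    by_contra! h
    exact mem_support_iff.mp hn (hf n h)
  rw [← smul_eq_C_mul, map_smul]
  exact Submodule.smul_mem _ _ (weightLT_mono hwn (hT n))

theorem pow_map_mem_weightLT [Semiring R] {T : Module.End R R[X]}
    (hT : ∀ n, T (X ^ n) ∈ weightLT R w (w n)) (k : ℕ) {f : R[X]}
    (hf : f ∈ weightLT R w (N + k)) : (T ^ k) f ∈ weightLT R w N := by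
  induction k generalizing f with
  | zero => exact hf
  | succ k ih =>
    rw [pow_succ, Module.End.mul_apply]
    exact ih (map_mem_weightLT hT hf)

theorem nilpIndex_le_of_mem_weightLT {R : Type} [CommRing R] {T : Module.End R R[X]}
    (hT : ∀ n, T (X ^ n) ∈ weightLT R w (w n)) {f : R[X]} (hf : f ∈ weightLT R w (N + 1)) :
    nilpIndex T f ≤ N := by
  refine csSup_le' fun k hk ↦ ?_
  by_contra! h
  have hmem : (T ^ k) f ∈ weightLT R w 0 :=
    pow_map_mem_weightLT hT k (weightLT_mono (by omega) hf)
  rw [weightLT_zero, Submodule.mem_bot] at hmem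
  exact hk hmem

end WeightLT

section Recurrence

/-- The shift operator `t ↦ (n ↦ t (n + 1))` on sequences in a module; a linear recurrence with
companion polynomial `P` is the equation `aeval (seqShift A M) P t = 0`. -/
def seqShift (A M : Type*) [Semiring A] [AddCommMonoid M] [Module A M] : Module.End A (ℕ → M) :=
  LinearMap.funLeft A M Nat.succ

/-- The companion polynomial `X ^ q + c 1 * X ^ (q - 1) + ⋯ + c q` of a linear recurrence of
order `q`. -/
noncomputable def companionPoly {A : Type*} [Semiring A] (q : ℕ) (c : ℕ → A) : A[X] :=
  X ^ q + ∑ i ∈ Finset.Icc 1 q, C (c i) * X ^ (q - i)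

variable {A M : Type*}

theorem seqShift_pow_apply [Semiring A] [AddCommMonoid M] [Module A M] (k : ℕ) (t : ℕ → M)
    (n : ℕ) : (seqShift A M ^ k) t n = t (n + k) := by
  induction k generalizing n with
  | zero => rfl
  | succ k ih =>
    rw [pow_succ', Module.End.mul_apply, seqShift, LinearMap.funLeft_apply, ← seqShift, ih,
      Nat.succ_add_eq_add_succ]

theorem aeval_seqShift_pow_companionPoly_apply [CommSemiring A] [AddCommMonoid M] [Module A M]
    (N q : ℕ) (c : ℕ → A) (t : ℕ → M) (n : ℕ) :
    aeval (seqShift A M ^ N) (companionPoly q c) t n =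
      t (n + N * q) + ∑ i ∈ Finset.Icc 1 q, c i • t (n + N * (q - i)) := by
  simp [companionPoly, ← pow_mul, seqShift_pow_apply, LinearMap.sum_apply]

theorem aeval_seqShift_pow_companionPoly_eq_zero_iff [CommRing A] [AddCommGroup M] [Module A M]
    {N q : ℕ} {c : ℕ → A} {t : ℕ → M} :
    aeval (seqShift A M ^ N) (companionPoly q c) t = 0 ↔
      ∀ n, N * q ≤ n → t n = -∑ i ∈ Finset.Icc 1 q, c i • t (n - N * i) := by
  have hsum (n : ℕ) : ∑ i ∈ Finset.Icc 1 q, c i • t (n + N * q - N * i) =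
      ∑ i ∈ Finset.Icc 1 q, c i • t (n + N * (q - i)) := by
    refine Finset.sum_congr rfl fun i hi ↦ ?_
    have hiq : N * i ≤ N * q := Nat.mul_le_mul_left N (Finset.mem_Icc.mp hi).2
    rw [Nat.mul_sub, Nat.add_sub_assoc hiq]
  rw [funext_iff]
  simp only [aeval_seqShift_pow_companionPoly_apply, Pi.zero_apply, ← hsum, add_eq_zero_iff_eq_neg]
  refine ⟨fun h n hn ↦ ?_, fun h n ↦ h _ (Nat.le_add_left _ _)⟩
  obtain ⟨j, rfl⟩ := Nat.exists_eq_add_of_le' hn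
  exact h j

theorem companionPoly_pow_expChar_pow [CommSemiring A] (p e : ℕ) [ExpChar A p] (q : ℕ)
    (c : ℕ → A) :
    companionPoly q c ^ p ^ e = expand A (p ^ e) (companionPoly q fun i ↦ c i ^ p ^ e) := by
  rw [← map_iterateFrobenius_expand, map_expand]
  simp [companionPoly, iterateFrobenius_def, Polynomial.map_sum]

theorem recurrence_pow_expChar_pow [CommRing A] [AddCommGroup M] [Module A M] (p e : ℕ)
    [ExpChar A p] {q : ℕ} {c : ℕ → A} {t : ℕ → M}
    (ht : ∀ n, q ≤ n → t n = -∑ i ∈ Finset.Icc 1 q, c i • t (n - i)) {n : ℕ}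
    (hn : p ^ e * q ≤ n) :
    t n = -∑ i ∈ Finset.Icc 1 q, c i ^ p ^ e • t (n - p ^ e * i) := by
  have hann : aeval (seqShift A M) (companionPoly q c) t = 0 := by
    rw [← pow_one (seqShift A M)]
    exact aeval_seqShift_pow_companionPoly_eq_zero_iff.mpr (by simpa only [one_mul] using ht)
  have hann_pow : aeval (seqShift A M) (companionPoly q c ^ p ^ e) t = 0 := by
    rw [← Nat.sub_one_add_one (expChar_pow_pos A p e).ne', pow_succ, map_mul, Module.End.mul_apply,
      hann, map_zero]
  rw [companionPoly_pow_expChar_pow, expand_aeval] at hann_pow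
  exact aeval_seqShift_pow_companionPoly_eq_zero_iff.mp hann_pow n hn

end Recurrence

theorem mem_weightLT_digitContent_of_recurrence {R : Type*} [CommRing R] {p k q : ℕ}
    [ExpChar R p] (hq : q = p ^ k) (hq1 : 1 < q) {c t : ℕ → R[X]}
    (hc : ∀ i ∈ Finset.Icc 1 q, c i ∈ weightLT R (digitContent q (q - 1)) i)
    (ht : ∀ n < q, t n ∈ weightLT R (digitContent q (q - 1)) (digitContent q (q - 1) n))
    (hrec : ∀ n, q ≤ n → t n = -∑ i ∈ Finset.Icc 1 q, c i * t (n - i)) (n : ℕ) :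
    t n ∈ weightLT R (digitContent q (q - 1)) (digitContent q (q - 1) n) := by
  induction n using Nat.strong_induction_on with
  | _ n ih =>
    rcases Nat.lt_or_ge n q with hn | hn
    · exact ht n hn
    obtain ⟨m, hm⟩ : ∃ m, Nat.log q n = m + 1 :=
      Nat.exists_eq_succ_of_ne_zero (Nat.log_pos hq1 hn).ne'
    have hlow : q ^ (m + 1) ≤ n := hm ▸ Nat.pow_log_le_self q (by omega)
    have hhigh : n < q ^ (m + 2) := by simpa only [hm] using Nat.lt_pow_succ_log_self hq1 n
    have hpow : p ^ (k * m) = q ^ m := by rw [hq, pow_mul]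
    rw [recurrence_pow_expChar_pow p (k * m) (c := c) (t := t) hrec (by rwa [hpow, ← pow_succ])]
    refine Submodule.neg_mem _ (Submodule.sum_mem _ fun i hi ↦ ?_)
    obtain ⟨hi1, hiq⟩ := Finset.mem_Icc.mp hi
    obtain ⟨j, rfl⟩ := Nat.exists_eq_add_of_le' hi1
    have hcoeff : c (j + 1) ^ p ^ (k * m) ∈
        weightLT R (digitContent q (q - 1)) ((q - 1) ^ m * j + 1) :=
      pow_expChar_pow_mem_weightLT p
        (fun l ↦ by rw [hpow, digitContent_pow_mul hq1]) (hc (j + 1) hi)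
    have hprev := ih (n - p ^ (k * m) * (j + 1))
      (Nat.sub_lt (by omega) (Nat.mul_pos (expChar_pow_pos R p _) j.succ_pos))
    have hdrop := digitContent_sub_pow_mul_add_le (d := q - 1) hq1 (by omega) hiq hlow hhigh
    rw [hpow] at hcoeff hprev ⊢
    exact weightLT_mono (by rw [mul_add_one ((q - 1) ^ m)] at hdrop; omega)
      (mul_mem_weightLT (digitContent_add_le hq1 (by omega)) hcoeff hprev)

theorem stmt3_general {R : Type} [CommRing R] {p k q : ℕ} [ExpChar R p] (hq : q = p ^ k)
    (hq3 : 3 ≤ q) {T : Module.End R R[X]} (hT : ∀ n < q, (T (X ^ n)).degree < n) {c : ℕ → R[X]}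
    (hc : ∀ i, 1 ≤ i → i < q → (c i).degree < i) (hcq : (c q).degree ≤ q)
    (hrec : ∀ n, q ≤ n → T (X ^ n) = -∑ i ∈ Finset.Icc 1 q, c i * T (X ^ (n - i))) (n : ℕ) :
    (nilpIndex T (X ^ n) : ℝ) ≤
      (q - 1 : ℕ) * (q - 1 : ℕ) * (n : ℝ) ^ Real.logb q (q - 1 : ℕ) := by
  have hq1 : 1 < q := by omega
  have hle := digitContent_le_self (q.sub_le 1)
  have hinit (n : ℕ) (hn : n < q) :
      T (X ^ n) ∈ weightLT R (digitContent q (q - 1)) (digitContent q (q - 1) n) := by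
    rw [digitContent_of_lt hq1 hn]
    exact mem_weightLT_of_degree_lt hle (hT n hn)
  have hcoeff (i : ℕ) (hi : i ∈ Finset.Icc 1 q) :
      c i ∈ weightLT R (digitContent q (q - 1)) i := by
    obtain ⟨hi1, hiq⟩ := Finset.mem_Icc.mp hi
    rcases hiq.lt_or_eq with hiq | rfl
    · exact mem_weightLT_of_degree_lt hle (hc i hi1 hiq)
    · exact mem_weightLT_of_degree_le hle (by rw [digitContent_self hq1]; omega) hcq
  have hlower := mem_weightLT_digitContent_of_recurrence hq hq1 hcoeff hinit hrec
  have hnilp : nilpIndex T (X ^ n) ≤ digitContent q (q - 1) n :=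
    nilpIndex_le_of_mem_weightLT hlower (X_pow_mem_weightLT (Nat.lt_succ_self _))
  exact (Nat.cast_le.mpr hnilp).trans (digitContent_le_rpow hq1 (by omega) n)

/-- **Toy case of the Nilpotence Growth Theorem.** -/
theorem stmt3 (p : ℕ) (hp : p.Prime) (k q : ℕ) (hq : q = p ^ k) (hq3 : 3 ≤ q)
    (T : Module.End (ZMod p) (Polynomial (ZMod p)))
    (hdeglow : ∀ f : Polynomial (ZMod p), f ≠ 0 → (T f).degree < f.degree)
    (a : ZMod p) (c : ℕ → Polynomial (ZMod p)) (r : Polynomial (ZMod p))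
    (hci : ∀ i, 1 ≤ i → i ≤ q - 1 → (c i).degree < (i : WithBot ℕ))
    (hcq : c q = C a * X ^ q + r)
    (hr : r.degree < (q : WithBot ℕ))
    (hrec : ∀ n, q ≤ n →
      T ((X : Polynomial (ZMod p)) ^ n) = -∑ i ∈ Finset.Icc 1 q, c i * T (X ^ (n - i))) :
    ∃ Cst : ℝ, 0 < Cst ∧ ∀ n : ℕ, 1 ≤ n →
      (nilpIndex T (X ^ n) : ℝ) ≤
        Cst * (n : ℝ) ^ (Real.log ((q - 1 : ℕ) : ℝ) / Real.log (q : ℝ)) := by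
  have : Fact p.Prime := ⟨hp⟩
  have hq0 : 0 < ((q - 1 : ℕ) : ℝ) := Nat.cast_pos.mpr (by omega)
  exact ⟨_, mul_pos hq0 hq0, fun n _ ↦ stmt3_general hq hq3
    (fun n _ ↦ (hdeglow _ (pow_ne_zero n X_ne_zero)).trans_eq (degree_X_pow n))
    (fun i hi hiq ↦ hci i hi (by omega))
    (hcq ▸ degree_add_le_of_degree_le (degree_C_mul_X_pow_le _ _) hr.le) hrec n⟩
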